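/- Let A be a commutative ring, A' a commutative A-algebra, d ≥ 1 an integer, and B an A-module that is free of finite rank. Then the natural A'-linear map ((⨂[A]^d B)^{S_d}) ⊗_A A' → (⨂[A']^d (B ⊗_A A'))^{S_d}, induced by base change of the tensor power along A → A' (which carries S_d-fixed elements to S_d-fixed elements), is an isomorphism of A'-modules. In other words, the submodule of symmetric tensors in the d-fold tensor power of a finite free module commutes with arbitrary base change. -/

import Mathlib

open scoped TensorProduct

/-- The submodule of the `d`-fold tensor power `⨂[A]^d B` consisting of the elements
fixed by the action of the symmetric group `S_d` permuting the tensor factors. -/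
def symmetricFixed (A : Type*) [CommSemiring A] (d : ℕ) (B : Type*) [AddCommMonoid B]
    [Module A B] : Submodule A (⨂[A] _ : Fin d, B) where
  carrier := {z | ∀ σ : Equiv.Perm (Fin d), PiTensorProduct.reindex A (fun _ => B) σ z = z}
  add_mem' hx hy := fun σ => by rw [map_add, hx σ, hy σ]
  zero_mem' := fun σ => by rw [map_zero]
  smul_mem' a x hx := fun σ => by rw [map_smul, hx σ]

/-- The canonical base-change map `⨂[A]^d B → ⨂[A']^d (A' ⊗[A] B)` sending
`b_0 ⊗ ⋯ ⊗ b_{d-1}` to `(1 ⊗ b_0) ⊗ ⋯ ⊗ (1 ⊗ b_{d-1})`. -/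
noncomputable def tensorPowerBaseChange (A A' B : Type*) [CommRing A] [CommRing A']
    [Algebra A A'] [AddCommGroup B] [Module A B] (d : ℕ) :
    (⨂[A] _ : Fin d, B) →ₗ[A] ⨂[A'] _ : Fin d, (A' ⊗[A] B) :=
  PiTensorProduct.lift
    (((PiTensorProduct.tprod A' (s := fun _ : Fin d => A' ⊗[A] B)).restrictScalars
      A).compLinearMap fun _ => TensorProduct.mk A A' B 1)

/-!
For a basis `b` of `B`, the pure tensors of words in `b` form a basis of `⨂[A]^d B` that `S_d`
permutes. The invariants of a permutation module are free on the orbit sums, whatever the base ring,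
and base change carries orbit sums to orbit sums.
-/

open Module MulAction

section PermInvariants

variable {R G J M : Type*} [Semiring R] [Group G] [MulAction G J] [AddCommMonoid M] [Module R M]

variable (G) in
/-- The invariants of the permutation module with basis `e` on which `G` acts through its action on
the index set, encoded as the vectors whose coordinates are constant on orbits. -/
def permInvariants (e : Basis J R M) : Submodule R M where
  carrier := {z | ∀ (g : G) (j : J), e.repr z (g • j) = e.repr z j}
  add_mem' hx hy g j := by simp [hx g j, hy g j]
  zero_mem' g j := by simp
  smul_mem' a x hx g j := by simp [hx g j]

theorem repr_apply_smul {e : Basis J R M} {T : M →ₗ[R] M} {g : G}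
    (hT : ∀ j, T (e j) = e (g • j)) (z : M) (j : J) :
    e.repr (T z) (g • j) = e.repr z j := by
  classical
  have h : Finsupp.lapply (g • j) ∘ₗ e.repr.toLinearMap ∘ₗ T =
      Finsupp.lapply j ∘ₗ e.repr.toLinearMap :=
    e.ext fun k => by simp [hT, Finsupp.single_apply]
  exact LinearMap.congr_fun h z

theorem mem_permInvariants_iff {e : Basis J R M} {T : G → M →ₗ[R] M}
    (hT : ∀ g j, T g (e j) = e (g • j)) {z : M} :
    z ∈ permInvariants G e ↔ ∀ g, T g z = z := by
  constructor
  · refine fun hz g => e.ext_elem fun j => ?_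
    rw [← hz g⁻¹ j, ← repr_apply_smul (hT g) z, smul_inv_smul]
  · intro hz g j
    rw [← repr_apply_smul (hT g) z j, hz g]

end PermInvariants

section OrbitSum

variable {R G J M : Type*} [Semiring R] [Group G] [MulAction G J] [AddCommMonoid M] [Module R M]

/-- The sum of a family of vectors over an orbit of its index set, with the junk value `0` when
infinitely many vectors of the orbit are nonzero. -/
noncomputable def orbitSum (v : J → M) (ω : orbitRel.Quotient G J) : M :=
  ∑ᶠ j ∈ ω.orbit, v j

theorem finite_quotient_orbit [∀ j : J, Finite (orbit G j)]
    (ω : orbitRel.Quotient G J) : ω.orbit.Finite := by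
  induction ω using Quotient.inductionOn' with
  | h j => exact Set.toFinite (orbit G j)

theorem map_orbitSum {N F : Type*} [AddCommMonoid N] [FunLike F M N] [AddMonoidHomClass F M N]
    [∀ j : J, Finite (orbit G j)] (f : F) (v : J → M) (ω : orbitRel.Quotient G J) :
    f (orbitSum v ω) = orbitSum (fun j => f (v j)) ω :=
  AddMonoidHom.map_finsum_mem v (f : M →+ N) (finite_quotient_orbit ω)

variable [∀ j : J, Finite (orbit G j)] (e : Basis J R M)

theorem repr_orbitSum (ω : orbitRel.Quotient G J) (j : J) :
    e.repr (orbitSum e ω) j = Finsupp.single ω 1 (Quotient.mk'' j) := by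
  classical
  rw [map_orbitSum, orbitSum,
    finsum_mem_eq_finite_toFinset_sum _ (finite_quotient_orbit ω)]
  simp [Finsupp.finsetSum_apply, Finsupp.single_apply, orbitRel.Quotient.mem_orbit, eq_comm]

theorem repr_linearCombination_orbitSum (c : orbitRel.Quotient G J →₀ R) (j : J) :
    e.repr (Finsupp.linearCombination R (orbitSum e) c) j = c (Quotient.mk'' j) := by
  induction c using Finsupp.induction_linear with
  | zero => simp
  | add c₁ c₂ h₁ h₂ => simp only [map_add, Finsupp.add_apply, h₁, h₂]
  | single ω r =>
    rw [Finsupp.linearCombination_single, map_smul, Finsupp.smul_apply, repr_orbitSum,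
      ← Finsupp.smul_apply, Finsupp.smul_single_one]

theorem linearIndependent_orbitSum :
    LinearIndependent R (orbitSum e : orbitRel.Quotient G J → M) := by
  intro c₁ c₂ h
  ext ω
  induction ω using Quotient.inductionOn' with
  | h j => rw [← repr_linearCombination_orbitSum e, h, repr_linearCombination_orbitSum]

theorem span_orbitSum :
    Submodule.span R (Set.range (orbitSum e : orbitRel.Quotient G J → M)) =
      permInvariants G e := by
  rw [← Finsupp.range_linearCombination]
  apply le_antisymm
  · rintro _ ⟨c, rfl⟩ g j
    have hω : (Quotient.mk'' (g • j) : orbitRel.Quotient G J) = Quotient.mk'' j :=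
      Quotient.sound' (mem_orbit j g)
    rw [repr_linearCombination_orbitSum, repr_linearCombination_orbitSum, hω]
  · intro z hz
    let c : orbitRel.Quotient G J →₀ R :=
      (e.repr z).comapDomain Quotient.out Quotient.out_injective.injOn
    refine ⟨c, e.ext_elem fun j => ?_⟩
    obtain ⟨g, hg⟩ : (Quotient.mk'' j : orbitRel.Quotient G J).out ∈ orbit G j :=
      Quotient.mk_out (s := orbitRel G J) j
    rw [repr_linearCombination_orbitSum, Finsupp.comapDomain_apply, ← hg, hz]

variable (G) in
/-- The basis of the invariants of a permutation module given by the orbit sums of the permuted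
basis. -/
noncomputable def permInvariantsBasis : Basis (orbitRel.Quotient G J) R (permInvariants G e) :=
  (Basis.span (linearIndependent_orbitSum e)).map (LinearEquiv.ofEq _ _ (span_orbitSum e))

theorem coe_permInvariantsBasis (ω : orbitRel.Quotient G J) :
    (permInvariantsBasis G e ω : M) = orbitSum e ω := by
  simp [permInvariantsBasis]

end OrbitSum

section BaseChange

variable {A A' G J M M' : Type*} [CommSemiring A] [CommSemiring A'] [Algebra A A'] [Group G]
  [MulAction G J] [∀ j : J, Finite (orbit G j)]
  [AddCommMonoid M] [Module A M] [AddCommMonoid M'] [Module A M'] [Module A' M']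
  [IsScalarTower A A' M'] {e : Basis J A M} {e' : Basis J A' M'} {f : M →ₗ[A] M'}

variable (G e e') in
/-- The isomorphism from the base change of the invariants of a permutation module to the
invariants of a permutation module over the larger ring, matching orbit sums. -/
noncomputable def permInvariantsBaseChangeEquiv :
    A' ⊗[A] permInvariants G e ≃ₗ[A'] permInvariants G e' :=
  ((permInvariantsBasis G e).baseChange A').equiv (permInvariantsBasis G e') (Equiv.refl _)

theorem liftBaseChange_permInvariants_eq (hf : ∀ j, f (e j) = e' j) :
    (f ∘ₗ (permInvariants G e).subtype).liftBaseChange A' =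
      (permInvariants G e').subtype ∘ₗ (permInvariantsBaseChangeEquiv G e e').toLinearMap := by
  refine ((permInvariantsBasis G e).baseChange A').ext fun ω => ?_
  calc (f ∘ₗ (permInvariants G e).subtype).liftBaseChange A'
        ((permInvariantsBasis G e).baseChange A' ω)
      = f (orbitSum e ω) := by simp [coe_permInvariantsBasis]
    _ = orbitSum e' ω := by simp only [map_orbitSum, hf]
    _ = ((permInvariants G e').subtype ∘ₗ (permInvariantsBaseChangeEquiv G e e').toLinearMap)
        ((permInvariantsBasis G e).baseChange A' ω) := by
      simp [permInvariantsBaseChangeEquiv, coe_permInvariantsBasis, -Basis.baseChange_apply]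

theorem liftBaseChange_permInvariants_injective (hf : ∀ j, f (e j) = e' j) :
    Function.Injective ((f ∘ₗ (permInvariants G e).subtype).liftBaseChange A') := by
  rw [liftBaseChange_permInvariants_eq hf]
  exact Subtype.val_injective.comp (permInvariantsBaseChangeEquiv G e e').injective

theorem range_liftBaseChange_permInvariants (hf : ∀ j, f (e j) = e' j) :
    LinearMap.range ((f ∘ₗ (permInvariants G e).subtype).liftBaseChange A') =
      permInvariants G e' := by
  rw [liftBaseChange_permInvariants_eq hf, LinearEquiv.range_comp, Submodule.range_subtype]

end BaseChange

section TensorPower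

attribute [local instance] arrowAction

theorem reindex_basis_piTensorProduct {R ι I M : Type*} [Finite ι] [CommSemiring R]
    [AddCommMonoid M] [Module R M] (b : Basis I R M) (σ : Equiv.Perm ι) (w : ι → I) :
    PiTensorProduct.reindex R (fun _ => M) σ (Basis.piTensorProduct (fun _ => b) w) =
      Basis.piTensorProduct (fun _ => b) (σ • w) := by
  rw [Basis.piTensorProduct_apply, Basis.piTensorProduct_apply]
  exact PiTensorProduct.reindex_tprod σ fun i => b (w i)

theorem symmetricFixed_eq_permInvariants {R I M : Type*} [CommSemiring R] [AddCommMonoid M]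
    [Module R M] (b : Basis I R M) (d : ℕ) :
    symmetricFixed R d M =
      permInvariants (Equiv.Perm (Fin d)) (Basis.piTensorProduct fun _ : Fin d => b) := by
  ext z
  exact (mem_permInvariants_iff
    (T := fun σ => (PiTensorProduct.reindex R (fun _ => M) σ).toLinearMap)
    (reindex_basis_piTensorProduct b)).symm

theorem tensorPowerBaseChange_basis {A A' B I : Type*} [CommRing A] [CommRing A'] [Algebra A A']
    [AddCommGroup B] [Module A B] (b : Basis I A B) (d : ℕ) (w : Fin d → I) :
    tensorPowerBaseChange A A' B d (Basis.piTensorProduct (fun _ => b) w) =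
      Basis.piTensorProduct (fun _ => b.baseChange A') w := by
  simp [tensorPowerBaseChange]

theorem symmetricFixed_baseChange_bijective_general {A A' B : Type*} [CommRing A] [CommRing A']
    [Algebra A A'] [AddCommGroup B] [Module A B] [Module.Free A B] (d : ℕ) :
    ∃ φ : (A' ⊗[A] (symmetricFixed A d B)) →ₗ[A'] ⨂[A'] _ : Fin d, (A' ⊗[A] B),
      (∀ (a : A') (z : symmetricFixed A d B),
        φ (a ⊗ₜ[A] z) = a • tensorPowerBaseChange A A' B d (z : ⨂[A] _ : Fin d, B)) ∧
      Function.Injective φ ∧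
      LinearMap.range φ = symmetricFixed A' d (A' ⊗[A] B) := by
  let b := Module.Free.chooseBasis A B
  have (w : Fin d → Module.Free.ChooseBasisIndex A B) : Finite (orbit (Equiv.Perm (Fin d)) w) :=
    Finite.finite_mulAction_orbit w
  have hf := tensorPowerBaseChange_basis (A' := A') b d
  rw [symmetricFixed_eq_permInvariants b, symmetricFixed_eq_permInvariants (b.baseChange A')]
  exact ⟨_, fun a z => LinearMap.liftBaseChange_tmul .., liftBaseChange_permInvariants_injective hf,
    range_liftBaseChange_permInvariants hf⟩

end TensorPower

/-- Symmetric tensors in the `d`-fold tensor power of a finite free module commute with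
arbitrary base change: the natural `A'`-linear map
`((⨂[A]^d B)^{S_d}) ⊗_A A' → (⨂[A']^d (B ⊗_A A'))^{S_d}` induced by base change is an
isomorphism of `A'`-modules. -/
theorem symmetricFixed_baseChange_bijective {A A' B : Type*} [CommRing A] [CommRing A']
    [Algebra A A'] [AddCommGroup B] [Module A B] [Module.Free A B] [Module.Finite A B]
    (d : ℕ) (hd : 1 ≤ d) :
    ∃ φ : (A' ⊗[A] (symmetricFixed A d B)) →ₗ[A'] ⨂[A'] _ : Fin d, (A' ⊗[A] B),
      (∀ (a : A') (z : symmetricFixed A d B),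
        φ (a ⊗ₜ[A] z) = a • tensorPowerBaseChange A A' B d (z : ⨂[A] _ : Fin d, B)) ∧
      Function.Injective φ ∧
      LinearMap.range φ = symmetricFixed A' d (A' ⊗[A] B) :=
  symmetricFixed_baseChange_bijective_general d
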